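/- (Basic energy estimate.) Let (v,u,θ) be a classical solution of the one-dimensional compressible Navier–Stokes system on ℝ whose initial energy E₀ := ∫_ℝ ( u₀(x)²/2 + R(v₀(x) − ln v₀(x) − 1) + c_v(θ₀(x) − ln θ₀(x) − 1) ) dx is finite. Then for every T ≥ 0: ∫_ℝ ( u(x,T)²/2 + R(v(x,T) − ln v(x,T) − 1) + c_v(θ(x,T) − ln θ(x,T) − 1) ) dx + μ ∫₀^T ∫_ℝ u_x(x,t)² / (v(x,t) θ(x,t)) dx dt + κ ∫₀^T ∫_ℝ θ_x(x,t)² / (v(x,t) θ(x,t)²) dx dt ≤ E₀. -/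

import Mathlib

/-!
Write `η = u²/2 + R(v - ln v - 1) + c_v(θ - ln θ - 1)`. The equations give the pointwise identity
`η_t = F_x - μ u_x²/(v θ) - κ θ_x²/(v θ²)` with the flux
`F = -u(Rθ/v - R) + μ u u_x/v + κ(1 - 1/θ) θ_x/v`, and the estimate is its integral over
`ℝ × [0, T]`. To justify the integration, the identity is tested against the weight
`w = (1 - (x/n)²)²` on `[-n, n]`, `n = s²` (`space_ineq`), which leaves the error `-∫ w' F`.

The velocity and temperature are bounded by the `H¹` bound, and `v` has a positive lower bound on
`ℝ × [0, T]`: conservation of volume carries the far-field value of `v` along uniformly in time,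
and a compact region remains (`v_lower`). Hence the part of `F` without the factor `1/θ`
contributes `O(1/s)`. The part `κ θ_x/(θ v)` is absorbed, by Young's inequality and
`w'² ≤ C w / n²`, into a fraction `1/s` of the heat dissipation plus `O(1/s)`, so that no lower
bound for `θ` uniform in space is needed (`flux_bound`).

Since solutions are only assumed to be differentiable in time at each point, integration in `t`
uses that the derivative is integrable on rectangles (`rate_integrable`, by means of joint
continuity of `v`, `u`, `θ` and the `L²` bounds for the derivatives), so the fundamental theorem of
calculus holds for almost every `x` and Fubini's theorem applies (`ftc_fubini`). Finally `s → ∞` by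
monotone convergence (`bump_lint_tendsto`).
-/

open MeasureTheory Filter Set

noncomputable section

/-- Partial derivative in the spatial variable. -/
def pdx (f : ℝ → ℝ → ℝ) (x t : ℝ) : ℝ := deriv (fun y => f y t) x

/-- Partial derivative in the time variable. -/
def pdt (f : ℝ → ℝ → ℝ) (x t : ℝ) : ℝ := deriv (fun s => f x s) t

/-- The `L²(ℝ)` norm, valued in `ℝ≥0∞`. -/
def L2 (f : ℝ → ℝ) : ENNReal := eLpNorm f 2 volume

/-- The `H¹(ℝ)` norm, valued in `ℝ≥0∞`. -/
def H1 (f : ℝ → ℝ) : ENNReal := L2 f + L2 (deriv f)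

/-- The `H²(ℝ)` norm, valued in `ℝ≥0∞`. -/
def H2 (f : ℝ → ℝ) : ENNReal := L2 f + L2 (deriv f) + L2 (deriv (deriv f))

/-- A classical solution of the 1-D compressible Navier–Stokes system in Lagrangian
coordinates on `ℝ`, together with the regularity and far-field conditions. -/
structure IsClassicalSolution (μ κ R cv : ℝ) (v u θ : ℝ → ℝ → ℝ) : Prop where
  v_pos : ∀ x t : ℝ, 0 ≤ t → 0 < v x t
  θ_pos : ∀ x t : ℝ, 0 ≤ t → 0 < θ x t
  smooth_x_v : ∀ t : ℝ, 0 ≤ t → ContDiff ℝ 2 (fun x => v x t)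
  smooth_x_u : ∀ t : ℝ, 0 ≤ t → ContDiff ℝ 2 (fun x => u x t)
  smooth_x_θ : ∀ t : ℝ, 0 ≤ t → ContDiff ℝ 2 (fun x => θ x t)
  smooth_t_v : ∀ x t : ℝ, 0 ≤ t → DifferentiableAt ℝ (fun s => v x s) t
  smooth_t_u : ∀ x t : ℝ, 0 ≤ t → DifferentiableAt ℝ (fun s => u x s) t
  smooth_t_θ : ∀ x t : ℝ, 0 ≤ t → DifferentiableAt ℝ (fun s => θ x s) t
  eq_mass : ∀ x t : ℝ, 0 ≤ t → pdt v x t = pdx u x t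
  eq_momentum : ∀ x t : ℝ, 0 ≤ t →
    pdt u x t + pdx (fun y s => R * θ y s / v y s) x t
      = μ * pdx (fun y s => pdx u y s / v y s) x t
  eq_energy : ∀ x t : ℝ, 0 ≤ t →
    cv * pdt θ x t + (R * θ x t / v x t) * pdx u x t
      = κ * pdx (fun y s => pdx θ y s / v y s) x t + μ * (pdx u x t) ^ 2 / v x t
  reg_H1 : ∀ T : ℝ, 0 ≤ T → ∃ B : ℝ, ∀ t ∈ Icc (0 : ℝ) T,
    H1 (fun x => v x t - 1) + H1 (fun x => u x t) + H1 (fun x => θ x t - 1)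
      ≤ ENNReal.ofReal B
  reg_H2 : ∀ T : ℝ, 0 < T →
    (∫⁻ t in Icc (0 : ℝ) T,
      (H2 (fun x => u x t) ^ 2 + H2 (fun x => θ x t - 1) ^ 2)) < ⊤
  farfield_v : ∀ t : ℝ, 0 ≤ t → Tendsto (fun x => v x t) (cocompact ℝ) (nhds 1)
  farfield_u : ∀ t : ℝ, 0 ≤ t → Tendsto (fun x => u x t) (cocompact ℝ) (nhds 0)
  farfield_θ : ∀ t : ℝ, 0 ≤ t → Tendsto (fun x => θ x t) (cocompact ℝ) (nhds 1)

/-- The initial data of `(v, u, θ)` are `(M, m)`-bounded. -/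
def InitBounded (M m : ℝ) (v u θ : ℝ → ℝ → ℝ) : Prop :=
  H1 (fun x => v x 0 - 1) + H1 (fun x => u x 0) + H1 (fun x => θ x 0 - 1)
      ≤ ENNReal.ofReal M
    ∧ (∀ x : ℝ, m ≤ v x 0) ∧ (∀ x : ℝ, m ≤ θ x 0)

/-- The solution is `K`-volume-bounded. -/
def VolBounded (K : ℝ) (v : ℝ → ℝ → ℝ) : Prop :=
  ∀ x t : ℝ, 0 ≤ t → K⁻¹ ≤ v x t ∧ v x t ≤ K

end

/-! ### The localised energy inequality at a fixed time -/

/-- A form of Young's inequality with a free parameter `s`; the sharp constant `1 / (4 s)` is not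
needed. -/
lemma abs_le_sq_add_inv {a s : ℝ} (hs : 0 < s) : |a| ≤ s * a ^ 2 + 1 / s := by
  rw [← sq_abs a]
  have h : s * |a| ^ 2 + 1 / s - |a| = s * (|a| - 1 / (2 * s)) ^ 2 + 3 / 4 * (1 / s) := by
    field_simp; ring
  have : 0 ≤ s * (|a| - 1 / (2 * s)) ^ 2 + 3 / 4 * (1 / s) := by positivity
  linarith

/-- The constant in the bound for the flux terms produced by the cutoff. -/
noncomputable def fluxConst (μ κ R m M : ℝ) : ℝ :=
  4 * (R * (M / m + 1) + μ * (M / m) + 2 * (κ / m))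

/-- Bound for `-w' F`, where `w = p²` is the cutoff, `q = p'`, and `F` is the energy flux. The part
of the flux that is singular as `θ → 0` is absorbed into the heat dissipation with a small
factor `1 / s`; this is why no lower bound on `θ` is needed. Here `n = s²` is the size of the
support of the cutoff. -/
lemma flux_bound {μ κ R m M s p q v u θ ux θx : ℝ} (hμ : 0 < μ) (hκ : 0 < κ) (hR : 0 < R)
    (hm : 0 < m) (hs : 1 ≤ s) (hp0 : 0 ≤ p) (hp1 : p ≤ 1) (hq : |q| ≤ 2 / s ^ 2)
    (hv : m ≤ v) (hθ0 : 0 < θ) (hθ : θ ≤ M) (hu : |u| ≤ M) :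
    -(2 * p * q) * (-u * (R * θ / v - R) + μ * u * (ux / v) + κ * ((1 - 1 / θ) * (θx / v)))
      ≤ κ / s * (p ^ 2 * (θx ^ 2 / (v * θ ^ 2)))
        + fluxConst μ κ R m M / s ^ 2 * (s * (u ^ 2 + ux ^ 2 + θx ^ 2) + 1 / s) := by
  have hs0 : 0 < s := by linarith
  have hv0 : 0 < v := by linarith
  have hM : 0 < M := by linarith
  set S := s * (u ^ 2 + ux ^ 2 + θx ^ 2) + 1 / s with hS
  have hu1 : |u| ≤ S := (abs_le_sq_add_inv hs0).trans (by
    rw [hS]; nlinarith [sq_nonneg u, sq_nonneg ux, sq_nonneg θx])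
  have hux1 : |ux| ≤ S := (abs_le_sq_add_inv hs0).trans (by
    rw [hS]; nlinarith [sq_nonneg u, sq_nonneg ux, sq_nonneg θx])
  have hθx1 : |θx| ≤ S := (abs_le_sq_add_inv hs0).trans (by
    rw [hS]; nlinarith [sq_nonneg u, sq_nonneg ux, sq_nonneg θx])
  have hS1 : 1 / s ≤ S := by rw [hS]; nlinarith [sq_nonneg u, sq_nonneg ux, sq_nonneg θx]
  have hS0 : 0 ≤ S := le_trans (by positivity) hS1
  have hpq : |2 * p * q| ≤ 4 / s ^ 2 := by
    rw [abs_mul, abs_of_nonneg (by positivity : (0:ℝ) ≤ 2 * p)]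
    calc 2 * p * |q| ≤ 2 * 1 * (2 / s ^ 2) := by gcongr
      _ = 4 / s ^ 2 := by ring
  -- the regular part of the flux
  have hA1 : |u * (R * θ / v - R)| ≤ R * (M / m + 1) * S := by
    rw [abs_mul]
    have : |R * θ / v - R| ≤ R * (M / m + 1) := by
      have h1 : R * θ / v ≤ R * M / m := by gcongr
      have h2 : 0 ≤ R * θ / v := by positivity
      have h3 : R * (M / m + 1) = R * M / m + R := by ring
      rw [abs_le]; constructor <;> rw [h3] <;> linarith
    calc |u| * |R * θ / v - R| ≤ S * (R * (M / m + 1)) := by gcongr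
      _ = _ := by ring
  have hA2 : |μ * u * (ux / v)| ≤ μ * (M / m) * S := by
    rw [abs_mul, abs_mul, abs_div, abs_of_pos hμ, abs_of_pos hv0]
    calc μ * |u| * (|ux| / v) ≤ μ * M * (S / m) := by gcongr
      _ = _ := by ring
  have hA3 : |κ * (θx / v)| ≤ κ / m * S := by
    rw [abs_mul, abs_div, abs_of_pos hκ, abs_of_pos hv0]
    calc κ * (|θx| / v) ≤ κ * (S / m) := by gcongr
      _ = _ := by ring
  have hreg : -(2 * p * q) * (-u * (R * θ / v - R) + μ * u * (ux / v) + κ * (θx / v))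
      ≤ 4 / s ^ 2 * ((R * (M / m + 1) + μ * (M / m) + κ / m) * S) := by
    refine (le_abs_self _).trans ?_
    rw [abs_mul, abs_neg]
    have : |-u * (R * θ / v - R) + μ * u * (ux / v) + κ * (θx / v)|
        ≤ (R * (M / m + 1) + μ * (M / m) + κ / m) * S := by
      refine (abs_add_three _ _ _).trans ?_
      rw [neg_mul, abs_neg]
      linarith
    gcongr
  -- the singular part, by Young's inequality
  have hsing : (2 * p * q) * (κ * (θx / (θ * v)))
      ≤ κ / s * (p ^ 2 * (θx ^ 2 / (v * θ ^ 2))) + 4 / s ^ 2 * (κ / m * S) := by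
    have h1 : (2 * p * q) * (κ * (θx / (θ * v)))
        ≤ κ / s * (p ^ 2 * (θx ^ 2 / (v * θ ^ 2))) + κ / v * (s * q ^ 2) := by
      have : κ / s * (p ^ 2 * (θx ^ 2 / (v * θ ^ 2))) + κ / v * (s * q ^ 2)
          - (2 * p * q) * (κ * (θx / (θ * v))) = κ / (v * s) * (p * θx / θ - s * q) ^ 2 := by
        field_simp; ring
      have : 0 ≤ κ / (v * s) * (p * θx / θ - s * q) ^ 2 := by positivity
      linarith
    have h2 : q ^ 2 ≤ (2 / s ^ 2) ^ 2 := by rw [← sq_abs]; gcongr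
    have h3 : κ / v * (s * q ^ 2) ≤ 4 / s ^ 2 * (κ / m * S) := by
      calc κ / v * (s * q ^ 2) ≤ κ / m * (s * (2 / s ^ 2) ^ 2) := by gcongr
        _ = 4 / s ^ 2 * (κ / m * (1 / s)) := by field_simp; ring
        _ ≤ _ := by gcongr
    linarith
  have e1 : -(2 * p * q) * (-u * (R * θ / v - R) + μ * u * (ux / v)
        + κ * ((1 - 1 / θ) * (θx / v)))
      = -(2 * p * q) * (-u * (R * θ / v - R) + μ * u * (ux / v) + κ * (θx / v))
        + (2 * p * q) * (κ * (θx / (θ * v))) := by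
    field_simp; ring
  have e2 : fluxConst μ κ R m M / s ^ 2 * S
      = 4 / s ^ 2 * ((R * (M / m + 1) + μ * (M / m) + κ / m) * S) + 4 / s ^ 2 * (κ / m * S) := by
    unfold fluxConst; ring
  rw [e1, e2]; linarith

/-- The time derivative of the energy density `u²/2 + R(v - ln v - 1) + c_v(θ - ln θ - 1)`,
expressed through spatial derivatives by means of the equations. -/
noncomputable def rate (μ κ R v u θ vx ux θx uxx θxx : ℝ) : ℝ :=
  u * (μ * ((uxx * v - ux * vx) / v ^ 2) - R * ((θx * v - θ * vx) / v ^ 2))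
    + R * (1 - 1 / v) * ux
    + (1 - 1 / θ) * (κ * ((θxx * v - θx * vx) / v ^ 2) + μ * ux ^ 2 / v - R * θ / v * ux)

/-- The cutoff `(1 - (x/n)²)²`, used on `[-n, n]`, where it vanishes at both ends. -/
noncomputable def cut (n x : ℝ) : ℝ := (1 - (x / n) ^ 2) ^ 2

/-- The localised energy balance at a fixed time. With the flux `F` one has
`rate + dissipation = F_x`; multiplying by the cutoff, which vanishes at `±s²`, and integrating by
parts leaves only `-∫ w' F`, which `flux_bound` controls. -/
lemma space_ineq {μ κ R m M s A : ℝ} (hμ : 0 < μ) (hκ : 0 < κ) (hR : 0 < R)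
    (hm : 0 < m) (hs : 1 ≤ s) {v u θ : ℝ → ℝ}
    (cv : ContDiff ℝ 2 v) (cu : ContDiff ℝ 2 u) (cθ : ContDiff ℝ 2 θ)
    (hv : ∀ x, m ≤ v x) (hθ0 : ∀ x, 0 < θ x) (hθ : ∀ x, θ x ≤ M) (hu : ∀ x, |u x| ≤ M)
    (hA : ∫ x in (-s ^ 2)..s ^ 2, (u x ^ 2 + deriv u x ^ 2 + deriv θ x ^ 2) ≤ A) :
    (∫ x in (-s ^ 2)..s ^ 2, cut (s ^ 2) x * rate μ κ R (v x) (u x) (θ x) (deriv v x) (deriv u x)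
        (deriv θ x) (deriv (deriv u) x) (deriv (deriv θ) x))
      + μ * (∫ x in (-s ^ 2)..s ^ 2, cut (s ^ 2) x * (deriv u x ^ 2 / (v x * θ x)))
      + κ * (1 - 1 / s) *
        (∫ x in (-s ^ 2)..s ^ 2, cut (s ^ 2) x * (deriv θ x ^ 2 / (v x * θ x ^ 2)))
      ≤ fluxConst μ κ R m M * (A + 2) / s := by
  have hs0 : 0 < s := by linarith
  have hn : -s ^ 2 ≤ s ^ 2 := by nlinarith
  have hv0 : ∀ x, 0 < v x := fun x => hm.trans_le (hv x)
  have hM : 0 < M := (hθ0 0).trans_le (hθ 0)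
  have hC : 0 ≤ fluxConst μ κ R m M := by unfold fluxConst; positivity
  have cv0 : Continuous v := cv.continuous
  have cu0 : Continuous u := cu.continuous
  have cθ0 : Continuous θ := cθ.continuous
  have cv1 : Continuous (deriv v) := cv.continuous_deriv (by norm_num)
  have cu1 : Continuous (deriv u) := cu.continuous_deriv (by norm_num)
  have cθ1 : Continuous (deriv θ) := cθ.continuous_deriv (by norm_num)
  have du1 : ContDiff ℝ 1 (deriv u) := by
    have := (contDiff_succ_iff_deriv (n := 1) (f := u)).1 (by simpa [one_add_one_eq_two] using cu)
    exact this.2.2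
  have dθ1 : ContDiff ℝ 1 (deriv θ) := by
    have := (contDiff_succ_iff_deriv (n := 1) (f := θ)).1 (by simpa [one_add_one_eq_two] using cθ)
    exact this.2.2
  have cu2 : Continuous (deriv (deriv u)) := du1.continuous_deriv (by norm_num)
  have cθ2 : Continuous (deriv (deriv θ)) := dθ1.continuous_deriv (by norm_num)
  have hdv : ∀ x, HasDerivAt v (deriv v x) x :=
    fun x => (cv.differentiable (by norm_num) x).hasDerivAt
  have hdu : ∀ x, HasDerivAt u (deriv u x) x :=
    fun x => (cu.differentiable (by norm_num) x).hasDerivAt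
  have hdθ : ∀ x, HasDerivAt θ (deriv θ x) x :=
    fun x => (cθ.differentiable (by norm_num) x).hasDerivAt
  have hdu2 : ∀ x, HasDerivAt (deriv u) (deriv (deriv u) x) x :=
    fun x => (du1.differentiable (by norm_num) x).hasDerivAt
  have hdθ2 : ∀ x, HasDerivAt (deriv θ) (deriv (deriv θ) x) x :=
    fun x => (dθ1.differentiable (by norm_num) x).hasDerivAt
  have nv : ∀ x, v x ≠ 0 := fun x => (hv0 x).ne'
  have nθ : ∀ x, θ x ≠ 0 := fun x => (hθ0 x).ne'
  have nvθ : ∀ x, v x * θ x ≠ 0 := fun x => mul_ne_zero (nv x) (nθ x)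
  have nv2 : ∀ x, v x ^ 2 ≠ 0 := fun x => pow_ne_zero _ (nv x)
  have nvθ2 : ∀ x, v x * θ x ^ 2 ≠ 0 := fun x => mul_ne_zero (nv x) (pow_ne_zero _ (nθ x))
  set G : ℝ → ℝ := fun x => rate μ κ R (v x) (u x) (θ x) (deriv v x) (deriv u x)
        (deriv θ x) (deriv (deriv u) x) (deriv (deriv θ) x) with hG
  have cG : Continuous G := by
    simp only [hG, rate]
    fun_prop (disch := assumption)
  have cw : Continuous (cut (s ^ 2)) := by unfold cut; fun_prop
  have cD1 : Continuous (fun x => deriv u x ^ 2 / (v x * θ x)) := by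
    fun_prop (disch := assumption)
  have cD2 : Continuous (fun x => deriv θ x ^ 2 / (v x * θ x ^ 2)) := by
    fun_prop (disch := assumption)
  -- the energy flux
  set F : ℝ → ℝ := fun x => -u x * (R * θ x / v x - R) + μ * u x * (deriv u x / v x)
    + κ * ((1 - 1 / θ x) * (deriv θ x / v x)) with hF
  have hdF : ∀ x, HasDerivAt F (G x + μ * (deriv u x ^ 2 / (v x * θ x))
      + κ * (deriv θ x ^ 2 / (v x * θ x ^ 2))) x := by
    intro x
    have h := (((hdu x).neg.mul ((((hdθ x).const_mul R).div (hdv x) (nv x)).sub_const R)).add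
      (((hdu x).const_mul μ).mul ((hdu2 x).div (hdv x) (nv x)))).add
      ((((((hasDerivAt_const x (1:ℝ)).div (hdθ x) (nθ x)).const_sub 1).mul
        ((hdθ2 x).div (hdv x) (nv x)))).const_mul κ)
    refine (h.congr_deriv ?_).congr_of_eventuallyEq (Eventually.of_forall fun y => ?_)
    · have := nv x
      have := nθ x
      simp only [hG, rate, Pi.neg_apply, Pi.div_apply]
      field_simp
      ring
    · simp [hF]
  have hdw : ∀ x, HasDerivAt (cut (s ^ 2)) (2 * (1 - (x / s ^ 2) ^ 2) * (-(2 * x / s ^ 4))) x := by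
    intro x
    have h := ((((hasDerivAt_id x).div_const (s ^ 2)).pow 2).const_sub 1).pow 2
    refine (h.congr_deriv ?_).congr_of_eventuallyEq (Eventually.of_forall fun y => ?_)
    · simp; field_simp; simp
    · simp [cut]
  have cF : Continuous F := by
    simp only [hF]; fun_prop (disch := assumption)
  set dWF : ℝ → ℝ := fun x => (2 * (1 - (x / s ^ 2) ^ 2) * (-(2 * x / s ^ 4))) * F x
      + cut (s ^ 2) x * (G x + μ * (deriv u x ^ 2 / (v x * θ x))
      + κ * (deriv θ x ^ 2 / (v x * θ x ^ 2))) with hdWF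
  have cdWF : Continuous dWF := by
    simp only [hdWF]; fun_prop (disch := assumption)
  have hzero : ∫ x in (-s ^ 2)..s ^ 2, dWF x = 0 := by
    rw [intervalIntegral.integral_eq_sub_of_hasDerivAt (f := fun x => cut (s ^ 2) x * F x)
      (fun x _ => (hdw x).mul (hdF x)) (cdWF.intervalIntegrable _ _)]
    have h1 : cut (s ^ 2) (s ^ 2) = 0 := by unfold cut; field_simp; simp
    have h2 : cut (s ^ 2) (-s ^ 2) = 0 := by unfold cut; field_simp; simp
    simp [h1, h2]
  set Q : ℝ → ℝ := fun x => fluxConst μ κ R m M / s ^ 2 *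
      (s * (u x ^ 2 + deriv u x ^ 2 + deriv θ x ^ 2) + 1 / s) with hQ
  have cQ : Continuous Q := by simp only [hQ]; fun_prop
  have hpt : ∀ x ∈ Icc (-s ^ 2) (s ^ 2), cut (s ^ 2) x * G x
      + μ * (cut (s ^ 2) x * (deriv u x ^ 2 / (v x * θ x)))
      + κ * (1 - 1 / s) * (cut (s ^ 2) x * (deriv θ x ^ 2 / (v x * θ x ^ 2))) ≤ dWF x + Q x := by
    intro x hx
    have hxa : |x| ≤ s ^ 2 := abs_le.2 (by simpa using hx)
    have hx1 : (x / s ^ 2) ^ 2 ≤ 1 := by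
      rw [sq_le_one_iff_abs_le_one, abs_div, abs_of_pos (by positivity : (0:ℝ) < s ^ 2)]
      exact div_le_one_of_le₀ hxa (by positivity)
    have hq : |(-(2 * x / s ^ 4))| ≤ 2 / s ^ 2 := by
      rw [abs_neg, abs_div, abs_mul, abs_two, abs_of_pos (by positivity : (0:ℝ) < s ^ 4)]
      calc 2 * |x| / s ^ 4 ≤ 2 * s ^ 2 / s ^ 4 := by gcongr
        _ = 2 / s ^ 2 := by field_simp
    have h := flux_bound (ux := deriv u x) (θx := deriv θ x) hμ hκ hR hm hs
      (p := 1 - (x / s ^ 2) ^ 2) (by linarith)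
      (by linarith [sq_nonneg (x / s ^ 2)]) hq (hv x) (hθ0 x) (hθ x) (hu x)
    have hcut : (1 - (x / s ^ 2) ^ 2) ^ 2 = cut (s ^ 2) x := rfl
    rw [hcut] at h
    simp only [hdWF, hQ, hF]
    have e : κ * (1 - 1 / s) * (cut (s ^ 2) x * (deriv θ x ^ 2 / (v x * θ x ^ 2)))
      = cut (s ^ 2) x * (κ * (deriv θ x ^ 2 / (v x * θ x ^ 2)))
        - κ / s * (cut (s ^ 2) x * (deriv θ x ^ 2 / (v x * θ x ^ 2))) := by ring
    rw [e]
    linarith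
  have i1 : IntervalIntegrable (fun x => cut (s ^ 2) x * G x) volume (-s ^ 2) (s ^ 2) :=
    (cw.mul cG).intervalIntegrable _ _
  have i2 : IntervalIntegrable (fun x => μ * (cut (s ^ 2) x * (deriv u x ^ 2 / (v x * θ x))))
      volume (-s ^ 2) (s ^ 2) := (continuous_const.mul (cw.mul cD1)).intervalIntegrable _ _
  have i3 : IntervalIntegrable (fun x => κ * (1 - 1 / s) *
      (cut (s ^ 2) x * (deriv θ x ^ 2 / (v x * θ x ^ 2)))) volume (-s ^ 2) (s ^ 2) :=
    (continuous_const.mul (cw.mul cD2)).intervalIntegrable _ _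
  have hmono := intervalIntegral.integral_mono_on hn ((i1.add i2).add i3)
    ((cdWF.intervalIntegrable _ _).add (cQ.intervalIntegrable _ _)) hpt
  rw [intervalIntegral.integral_add (i1.add i2) i3, intervalIntegral.integral_add i1 i2,
    intervalIntegral.integral_add (cdWF.intervalIntegrable _ _) (cQ.intervalIntegrable _ _),
    hzero, intervalIntegral.integral_const_mul, intervalIntegral.integral_const_mul] at hmono
  refine hmono.trans ?_
  have cSq : Continuous fun x => u x ^ 2 + deriv u x ^ 2 + deriv θ x ^ 2 := by fun_prop
  simp only [hQ]
  have iSq : IntervalIntegrable (fun x => s * (u x ^ 2 + deriv u x ^ 2 + deriv θ x ^ 2)) volume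
      (-s ^ 2) (s ^ 2) := (continuous_const.mul cSq).intervalIntegrable _ _
  rw [intervalIntegral.integral_const_mul, intervalIntegral.integral_add iSq (by simp),
    intervalIntegral.integral_const_mul, intervalIntegral.integral_const]
  calc 0 + fluxConst μ κ R m M / s ^ 2 *
      (s * (∫ x in (-s ^ 2)..s ^ 2, (u x ^ 2 + deriv u x ^ 2 + deriv θ x ^ 2))
        + (s ^ 2 - -s ^ 2) • (1 / s))
      ≤ 0 + fluxConst μ κ R m M / s ^ 2 * (s * A + (s ^ 2 - -s ^ 2) • (1 / s)) := by gcongr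
    _ = fluxConst μ κ R m M * (A + 2) / s := by simp only [smul_eq_mul]; field_simp; ring

/-! ### Consequences of the `H¹` bounds -/

lemma L2_sq (f : ℝ → ℝ) : L2 f ^ 2 = ∫⁻ x, ENNReal.ofReal (f x ^ 2) := by
  have h := eLpNorm_nnreal_pow_eq_lintegral (f := f) (μ := volume) (p := 2) (by norm_num)
  simp only [L2]
  have e : ((2 : NNReal) : ENNReal) = 2 := rfl
  rw [e] at h
  simp only [NNReal.coe_ofNat, ENNReal.rpow_ofNat] at h
  rw [h]
  refine lintegral_congr fun x => ?_
  rw [← ofReal_norm, ← ENNReal.ofReal_pow (norm_nonneg _), Real.norm_eq_abs, sq_abs]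

lemma integral_sq_le {f : ℝ → ℝ} (hf : Continuous f) {B : ℝ} (hB : 0 ≤ B)
    (h : L2 f ≤ ENNReal.ofReal B) {a b : ℝ} (hab : a ≤ b) :
    ∫ x in a..b, f x ^ 2 ≤ B ^ 2 := by
  have hi : IntegrableOn (fun x => f x ^ 2) (Ioc a b) := (hf.pow 2).integrableOn_Ioc
  rw [intervalIntegral.integral_of_le hab, ← ENNReal.ofReal_le_ofReal_iff (by positivity),
    ofReal_integral_eq_lintegral_ofReal hi
      (Eventually.of_forall fun x => sq_nonneg (f x)), ENNReal.ofReal_pow hB]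
  calc ∫⁻ x in Ioc a b, ENNReal.ofReal (f x ^ 2) ≤ ∫⁻ x, ENNReal.ofReal (f x ^ 2) :=
        setLIntegral_le_lintegral _ _
    _ = L2 f ^ 2 := (L2_sq f).symm
    _ ≤ _ := by gcongr

lemma integral_three_sq {f g h : ℝ → ℝ} (hf : Continuous f) (hg : Continuous g)
    (hh : Continuous h) {a b : ℝ} :
    ∫ x in a..b, (f x ^ 2 + g x ^ 2 + h x ^ 2)
      = (∫ x in a..b, f x ^ 2) + (∫ x in a..b, g x ^ 2) + ∫ x in a..b, h x ^ 2 := by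
  have i1 : IntervalIntegrable (fun x => f x ^ 2) volume a b := (hf.pow 2).intervalIntegrable _ _
  have i2 : IntervalIntegrable (fun x => g x ^ 2) volume a b := (hg.pow 2).intervalIntegrable _ _
  have i3 : IntervalIntegrable (fun x => h x ^ 2) volume a b := (hh.pow 2).intervalIntegrable _ _
  have i12 : IntervalIntegrable (fun x => f x ^ 2 + g x ^ 2) volume a b := i1.add i2
  rw [intervalIntegral.integral_add i12 i3, intervalIntegral.integral_add i1 i2]

/-- Hölder continuity of an `H¹` function, in the form obtained from Young's inequality;
optimising over `ε` would give the exponent `1/2`. -/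
lemma modulus {f : ℝ → ℝ} (hf : ContDiff ℝ 2 f) {B : ℝ} (hB : 0 ≤ B)
    (h : L2 (deriv f) ≤ ENNReal.ofReal B) {ε : ℝ} (hε : 0 < ε) (x y : ℝ) :
    |f x - f y| ≤ ε * B ^ 2 + |x - y| / ε := by
  wlog hxy : y ≤ x generalizing x y
  · rw [abs_sub_comm, abs_sub_comm x]; exact this y x (le_of_not_ge hxy)
  have c1 : Continuous (deriv f) := hf.continuous_deriv (by norm_num)
  rw [← intervalIntegral.integral_eq_sub_of_hasDerivAt (f := f) (f' := deriv f)
    (fun z _ => (hf.differentiable (by norm_num) z).hasDerivAt) (c1.intervalIntegrable _ _)]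
  refine (intervalIntegral.abs_integral_le_integral_abs hxy).trans ?_
  have h1 : ∫ z in y..x, |deriv f z| ≤ ∫ z in y..x, (ε * deriv f z ^ 2 + 1 / ε) :=
    intervalIntegral.integral_mono_on hxy (c1.abs.intervalIntegrable _ _)
      (((continuous_const.mul (c1.pow 2)).add continuous_const).intervalIntegrable _ _)
      fun z _ => abs_le_sq_add_inv hε
  refine h1.trans ?_
  have hi : IntervalIntegrable (fun z => ε * deriv f z ^ 2) volume y x :=
    (continuous_const.mul (c1.pow 2)).intervalIntegrable _ _
  rw [intervalIntegral.integral_add hi (by simp), intervalIntegral.integral_const_mul,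
    intervalIntegral.integral_const, abs_of_nonneg (sub_nonneg.2 hxy), smul_eq_mul, mul_one_div]
  have := integral_sq_le c1 hB h hxy
  gcongr

lemma sup_bound {f : ℝ → ℝ} (hf : ContDiff ℝ 2 f) {B : ℝ} (hB : 0 ≤ B)
    (h0 : L2 f ≤ ENNReal.ofReal B) (h : L2 (deriv f) ≤ ENNReal.ofReal B) (x : ℝ) :
    |f x| ≤ 2 * B ^ 2 + 2 := by
  have h1 : ∀ y ∈ Icc x (x + 1), |f x| - (B ^ 2 + 1) ≤ f y ^ 2 + 1 := by
    intro y hy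
    have hm := modulus hf hB h one_pos x y
    have h2 : |x - y| ≤ 1 := by rw [abs_le]; constructor <;> linarith [hy.1, hy.2]
    have h3 : |f y| ≤ 1 * f y ^ 2 + 1 / 1 := abs_le_sq_add_inv one_pos
    have h4 := abs_sub_abs_le_abs_sub (f x) (f y)
    simp only [one_mul, div_one] at hm h3
    linarith
  have c0 := hf.continuous
  have hi : IntervalIntegrable (fun y => f y ^ 2) volume x (x + 1) :=
    (c0.pow 2).intervalIntegrable _ _
  have h2 := intervalIntegral.integral_mono_on (g := fun y => f y ^ 2 + 1)
    (by linarith : x ≤ x + 1) (continuous_const.intervalIntegrable (μ := volume) _ _)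
    (((c0.pow 2).add continuous_const).intervalIntegrable _ _) h1
  rw [intervalIntegral.integral_add hi (by simp)] at h2
  simp only [intervalIntegral.integral_const, add_sub_cancel_left, one_smul] at h2
  have := integral_sq_le c0 hB h0 (by linarith : x ≤ x + 1)
  linarith

/-! ### Joint continuity and measurability -/

/-- The projection of time onto `[0, T]`. Composing with it turns functions that are only
controlled on `ℝ × [0, T]` into functions controlled on the whole plane. -/
noncomputable def clamp (T t : ℝ) : ℝ := max 0 (min t T)

lemma clamp_mem {T : ℝ} (hT : 0 ≤ T) (t : ℝ) : clamp T t ∈ Icc 0 T :=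
  ⟨le_max_left _ _, max_le hT (min_le_right _ _)⟩

lemma clamp_eq {T t : ℝ} (ht : t ∈ Icc 0 T) : clamp T t = t := by
  simp [clamp, ht.1, ht.2]

lemma clamp_cont (T : ℝ) : Continuous (clamp T) := by unfold clamp; fun_prop

/-- The hypotheses on each of `v`, `u`, `θ` on `ℝ × [0, T]` from which joint continuity,
measurability and integrability are derived. -/
structure Slab (T B : ℝ) (f : ℝ → ℝ → ℝ) : Prop where
  hT : 0 ≤ T
  hB : 0 ≤ B
  smooth : ∀ t ∈ Icc 0 T, ContDiff ℝ 2 (fun x => f x t)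
  cont : ∀ x, ∀ t ∈ Icc 0 T, ContinuousAt (fun s => f x s) t
  bound : ∀ t ∈ Icc 0 T, L2 (deriv fun x => f x t) ≤ ENNReal.ofReal B

lemma Slab.cont_clamp {T B : ℝ} {f : ℝ → ℝ → ℝ} (h : Slab T B f) (x : ℝ) :
    Continuous (fun t => f x (clamp T t)) :=
  continuous_iff_continuousAt.2 fun t =>
    ContinuousAt.comp (g := fun s => f x s) (h.cont x _ (clamp_mem h.hT t))
      (clamp_cont T).continuousAt

/-- Joint continuity: continuity in time at each point together with a modulus of continuity in
space that is uniform in time. -/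
lemma Slab.jointCont {T B : ℝ} {f : ℝ → ℝ → ℝ} (h : Slab T B f) :
    Continuous (fun p : ℝ × ℝ => f p.1 (clamp T p.2)) := by
  rw [continuous_iff_continuousAt]
  rintro ⟨x, t⟩
  rw [Metric.continuousAt_iff']
  intro e he
  obtain ⟨ε, hε, hεB⟩ : ∃ ε > 0, ε * B ^ 2 ≤ e / 4 := by
    refine ⟨e / (4 * (B ^ 2 + 1)), by positivity, ?_⟩
    rw [div_mul_eq_mul_div, div_le_div_iff₀ (by positivity) (by positivity)]
    nlinarith [sq_nonneg B]
  have h1 : ∀ᶠ p : ℝ × ℝ in nhds (x, t), |p.1 - x| < ε * (e / 4) := by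
    have : ContinuousAt (fun p : ℝ × ℝ => |p.1 - x|) (x, t) := by fun_prop
    exact this.eventually_lt_const (by simp; positivity)
  have h2 : ∀ᶠ p : ℝ × ℝ in nhds (x, t), |f x (clamp T p.2) - f x (clamp T t)| < e / 4 := by
    have : Continuous (fun p : ℝ × ℝ => |f x (clamp T p.2) - f x (clamp T t)|) :=
      (((h.cont_clamp x).comp continuous_snd).sub continuous_const).abs
    exact this.continuousAt.eventually_lt_const (by simp; positivity)
  filter_upwards [h1, h2] with p hp1 hp2
  have hm := modulus (h.smooth _ (clamp_mem h.hT p.2)) h.hB (h.bound _ (clamp_mem h.hT p.2)) hε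
    p.1 x
  have h3 : |p.1 - x| / ε ≤ e / 4 := by rw [div_le_iff₀ hε]; linarith
  rw [Real.dist_eq]
  have := abs_sub_le (f p.1 (clamp T p.2)) (f x (clamp T p.2)) (f x (clamp T t))
  linarith

/-- The spatial derivative of a jointly measurable function is jointly measurable, as a limit of
difference quotients. -/
lemma measurable_dx {g g' : ℝ → ℝ → ℝ} (hg : Measurable fun p : ℝ × ℝ => g p.1 p.2)
    (hd : ∀ x t, HasDerivAt (fun y => g y t) (g' x t) x) :
    Measurable fun p : ℝ × ℝ => g' p.1 p.2 := by
  have hlim : Tendsto (fun n : ℕ => (1 / ((n : ℝ) + 1))) atTop (nhdsWithin 0 {0}ᶜ) := by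
    refine tendsto_nhdsWithin_iff.2 ⟨tendsto_one_div_add_atTop_nhds_zero_nat, ?_⟩
    exact Eventually.of_forall fun n => by
      simp only [mem_compl_iff, mem_singleton_iff]; positivity
  refine measurable_of_tendsto_metrizable (f := fun (n : ℕ) (p : ℝ × ℝ) =>
    (1 / ((n : ℝ) + 1))⁻¹ * (g (p.1 + 1 / ((n : ℝ) + 1)) p.2 - g p.1 p.2)) (fun n => ?_) ?_
  · exact ((hg.comp ((measurable_fst.add_const _).prodMk measurable_snd)).sub hg).const_mul _
  · rw [tendsto_pi_nhds]
    rintro ⟨x, t⟩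
    exact (hd x t).tendsto_slope_zero.comp hlim

lemma Slab.hasDeriv {T B : ℝ} {f : ℝ → ℝ → ℝ} (h : Slab T B f) (x t : ℝ) :
    HasDerivAt (fun y => f y (clamp T t)) (deriv (fun y => f y (clamp T t)) x) x :=
  ((h.smooth _ (clamp_mem h.hT t)).differentiable (by norm_num) x).hasDerivAt

lemma deriv_contDiff {f : ℝ → ℝ} (hf : ContDiff ℝ 2 f) : ContDiff ℝ 1 (deriv f) :=
  ((contDiff_succ_iff_deriv (n := 1) (f := f)).1 (by simpa [one_add_one_eq_two] using hf)).2.2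

lemma Slab.meas_dx {T B : ℝ} {f : ℝ → ℝ → ℝ} (h : Slab T B f) :
    Measurable fun p : ℝ × ℝ => deriv (fun y => f y (clamp T p.2)) p.1 :=
  measurable_dx (g := fun x t => f x (clamp T t)) h.jointCont.measurable h.hasDeriv

lemma Slab.meas_dxx {T B : ℝ} {f : ℝ → ℝ → ℝ} (h : Slab T B f) :
    Measurable fun p : ℝ × ℝ => deriv (deriv fun y => f y (clamp T p.2)) p.1 :=
  measurable_dx (g := fun x t => deriv (fun y => f y (clamp T t)) x) h.meas_dx fun x t =>
    ((deriv_contDiff (h.smooth _ (clamp_mem h.hT t))).differentiable (by norm_num) x).hasDerivAt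

/-- Space-time square integrability from a time integral of spatial `L²` norms. -/
lemma memLp_slab {T : ℝ} {g : ℝ → ℝ → ℝ} (hg : Measurable fun p : ℝ × ℝ => g p.1 p.2)
    (h : ∫⁻ t in Icc 0 T, L2 (fun x => g x t) ^ 2 < ⊤) (a b : ℝ) :
    MemLp (fun p : ℝ × ℝ => g p.1 p.2) 2 (volume.restrict (Icc a b ×ˢ Icc 0 T)) := by
  rw [memLp_two_iff_integrable_sq hg.aestronglyMeasurable]
  refine ⟨(hg.pow_const 2).aestronglyMeasurable, ?_⟩
  rw [hasFiniteIntegral_iff_ofReal (Eventually.of_forall fun p => sq_nonneg _),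
    Measure.volume_eq_prod, ← Measure.prod_restrict,
    lintegral_prod_symm' _ (hg.pow_const 2).ennreal_ofReal]
  refine lt_of_le_of_lt (lintegral_mono fun t => ?_) h
  rw [L2_sq]
  exact setLIntegral_le_lintegral _ _

lemma Slab.memLp_dx {T B : ℝ} {f : ℝ → ℝ → ℝ} (h : Slab T B f) (a b : ℝ) :
    MemLp (fun p : ℝ × ℝ => deriv (fun y => f y (clamp T p.2)) p.1) 2
      (volume.restrict (Icc a b ×ˢ Icc 0 T)) := by
  refine memLp_slab (g := fun x t => deriv (fun y => f y (clamp T t)) x) h.meas_dx ?_ a b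
  calc ∫⁻ t in Icc 0 T, L2 (fun x => deriv (fun y => f y (clamp T t)) x) ^ 2
      ≤ ∫⁻ t in Icc 0 T, ENNReal.ofReal B ^ 2 := by
        refine lintegral_mono fun t => ?_
        have := h.bound _ (clamp_mem h.hT t)
        gcongr
    _ < ⊤ := by
        rw [lintegral_const]
        simp only [MeasurableSet.univ, Measure.restrict_apply, univ_inter, Real.volume_Icc]
        exact ENNReal.mul_lt_top (by simp) (by simp)

/-! ### Integration in time -/

/-- The fundamental theorem of calculus in time, integrated over a spatial interval. Only pointwise
differentiability and integrability of the derivative are required. -/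
lemma ftc_fubini {f g : ℝ → ℝ → ℝ} {a b T : ℝ} (hab : a ≤ b) (hT : 0 ≤ T)
    (hd : ∀ x, ∀ t ∈ Icc 0 T, HasDerivAt (fun s => f x s) (g x t) t)
    (hi : IntegrableOn (fun p : ℝ × ℝ => g p.1 p.2) (Icc a b ×ˢ Icc 0 T)) :
    ∫ x in a..b, (f x T - f x 0) = ∫ t in 0..T, ∫ x in a..b, g x t := by
  have hi' : Integrable (fun p : ℝ × ℝ => g p.1 p.2)
      ((volume.restrict (Ioc a b)).prod (volume.restrict (Ioc 0 T))) := by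
    rw [Measure.prod_restrict]
    exact hi.mono_set (prod_mono Ioc_subset_Icc_self Ioc_subset_Icc_self)
  rw [intervalIntegral.integral_of_le hab, intervalIntegral.integral_of_le hT]
  simp only [intervalIntegral.integral_of_le hab]
  rw [← integral_integral_swap (f := g) hi']
  refine integral_congr_ae ?_
  filter_upwards [hi'.prod_right_ae] with x hx
  rw [← intervalIntegral.integral_of_le hT, intervalIntegral.integral_eq_sub_of_hasDerivAt
    (f := fun s => f x s)]
  · rw [uIcc_of_le hT]; exact hd x
  · rw [intervalIntegrable_iff_integrableOn_Ioc_of_le hT]; exact hx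

lemma slice_integrable {g : ℝ → ℝ → ℝ} {a b T : ℝ} (hab : a ≤ b) (hT : 0 ≤ T)
    (hi : IntegrableOn (fun p : ℝ × ℝ => g p.1 p.2) (Icc a b ×ˢ Icc 0 T)) :
    IntervalIntegrable (fun t => ∫ x in a..b, g x t) volume 0 T := by
  have hi' : Integrable (fun p : ℝ × ℝ => g p.1 p.2)
      ((volume.restrict (Ioc a b)).prod (volume.restrict (Ioc 0 T))) := by
    rw [Measure.prod_restrict]
    exact hi.mono_set (prod_mono Ioc_subset_Icc_self Ioc_subset_Icc_self)
  rw [intervalIntegrable_iff_integrableOn_Ioc_of_le hT]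
  simp only [intervalIntegral.integral_of_le hab]
  exact hi'.integral_prod_right

/-! ### A uniform lower bound for the specific volume -/

lemma cocompact_cg : (cocompact ℝ).IsCountablyGenerated := by
  rw [cocompact_eq_atBot_atTop]; infer_instance

/-- Local conservation of volume (`d/dt ∫ v dx` over an interval is the difference of `u` at its
ends) propagates the far-field value of `v` uniformly in time, because `∫₀ᵀ |u(x,t)| dt → 0` as
`|x| → ∞`. The remaining compact region is covered by joint continuity. -/
lemma v_lower {T B M : ℝ} {v u : ℝ → ℝ → ℝ} (hv : Slab T B v) (hu : Slab T B u)
    (hpos : ∀ x, ∀ t ∈ Icc 0 T, 0 < v x t)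
    (hd : ∀ x, ∀ t ∈ Icc 0 T, HasDerivAt (fun s => v x s) (deriv (fun y => u y t) x) t)
    (huM : ∀ x, ∀ t ∈ Icc 0 T, |u x t| ≤ M)
    (fv : Tendsto (fun x => v x 0) (cocompact ℝ) (nhds 1))
    (fu : ∀ t ∈ Icc 0 T, Tendsto (fun x => u x t) (cocompact ℝ) (nhds 0)) :
    ∃ m > 0, ∀ x, ∀ t ∈ Icc 0 T, m ≤ v x t := by
  have hT := hv.hT
  have := cocompact_cg
  have hJ : Tendsto (fun x => ∫ t in 0..T, |u x (clamp T t)|) (cocompact ℝ) (nhds 0) := by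
    have := intervalIntegral.tendsto_integral_filter_of_dominated_convergence
      (μ := volume) (a := 0) (b := T) (l := cocompact ℝ) (F := fun x t => |u x (clamp T t)|)
      (f := fun _ => 0) (fun _ => M)
      (Eventually.of_forall fun x => (hu.cont_clamp x).abs.aestronglyMeasurable)
      (Eventually.of_forall fun x => Eventually.of_forall fun t _ => by
        simpa using huM x _ (clamp_mem hT t)) (by simp)
      (Eventually.of_forall fun t _ => by simpa using (fu _ (clamp_mem hT t)).abs)
    simpa using this
  obtain ⟨ε, hε, hεB⟩ : ∃ ε > 0, ε * B ^ 2 ≤ 1 / 8 := by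
    refine ⟨1 / (8 * (B ^ 2 + 1)), by positivity, ?_⟩
    rw [div_mul_eq_mul_div, div_le_div_iff₀ (by positivity) (by positivity)]
    nlinarith [sq_nonneg B]
  obtain ⟨l, hl⟩ : ∃ l, l = ε / 8 := ⟨_, rfl⟩
  have hl0 : 0 < l := by rw [hl]; positivity
  have hmod : ∀ x y, ∀ t ∈ Icc 0 T, |x - y| ≤ l → |v x t - v y t| ≤ 1 / 4 := by
    intro x y t ht hxy
    have h1 := modulus (hv.smooth t ht) hv.hB (hv.bound t ht) hε x y
    have h2 : |x - y| / ε ≤ 1 / 8 := by rw [div_le_iff₀ hε]; linarith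
    linarith
  have hshift : Tendsto (fun x : ℝ => x + l) (cocompact ℝ) (cocompact ℝ) :=
    (Homeomorph.addRight l).isClosedEmbedding.tendsto_cocompact
  have hev : ∀ᶠ x in cocompact ℝ, ∀ t ∈ Icc 0 T, 1 / 4 ≤ v x t := by
    filter_upwards [hJ.eventually_lt_const (by positivity : 0 < l / 16),
      (hJ.comp hshift).eventually_lt_const (by positivity : 0 < l / 16),
      fv.eventually_const_lt (by norm_num : (7 / 8 : ℝ) < 1)] with x hx1 hx2 hx3 t ht
    have hxl : x ≤ x + l := by linarith
    have hclos : ∀ y ∈ Icc x (x + l), |x - y| ≤ l := fun y hy => by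
      rw [abs_le]; constructor <;> linarith [hy.1, hy.2]
    have hsub : Icc 0 t ⊆ Icc 0 T := Icc_subset_Icc_right ht.2
    have hi : IntegrableOn (fun p : ℝ × ℝ => deriv (fun y => u y p.2) p.1)
        (Icc x (x + l) ×ˢ Icc 0 t) := by
      have h1 : IntegrableOn (fun p : ℝ × ℝ => deriv (fun y => u y (clamp T p.2)) p.1)
          (Icc x (x + l) ×ˢ Icc 0 t) := by
        have hK : IsCompact (Icc x (x + l) ×ˢ Icc 0 T) := isCompact_Icc.prod isCompact_Icc
        have : IsFiniteMeasure (volume.restrict (Icc x (x + l) ×ˢ Icc 0 T)) :=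
          ⟨by simpa using hK.measure_lt_top⟩
        have := (hu.memLp_dx x (x + l)).integrable (by norm_num)
        exact IntegrableOn.mono_set this (prod_mono le_rfl hsub)
      refine h1.congr_fun (fun p hp => ?_) (measurableSet_Icc.prod measurableSet_Icc)
      simp only [clamp_eq (hsub hp.2)]
    have hmain := ftc_fubini hxl ht.1 (fun y s hs => hd y s (hsub hs)) hi
    have hinner : ∀ s ∈ Icc 0 t, ∫ y in x..(x + l), deriv (fun y => u y s) y
        = u (x + l) (clamp T s) - u x (clamp T s) := by
      intro s hs
      rw [clamp_eq (hsub hs)]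
      have cs := hu.smooth s (hsub hs)
      exact intervalIntegral.integral_eq_sub_of_hasDerivAt (f := fun y => u y s)
        (fun z _ => (cs.differentiable (by norm_num) z).hasDerivAt)
        ((cs.continuous_deriv (by norm_num)).intervalIntegrable _ _)
    have hR : -(l / 8) ≤ ∫ s in 0..t, ∫ y in x..(x + l), deriv (fun y => u y s) y := by
      have e : ∫ s in 0..t, ∫ y in x..(x + l), deriv (fun y => u y s) y
          = ∫ s in 0..t, (u (x + l) (clamp T s) - u x (clamp T s)) :=
        intervalIntegral.integral_congr fun s hs => hinner s (by rwa [uIcc_of_le ht.1] at hs)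
      have c1 := hu.cont_clamp x
      have c2 := hu.cont_clamp (x + l)
      have hb : ∫ s in 0..t, -(|u (x + l) (clamp T s)| + |u x (clamp T s)|)
          ≤ ∫ s in 0..t, (u (x + l) (clamp T s) - u x (clamp T s)) :=
        intervalIntegral.integral_mono_on ht.1 ((c2.abs.add c1.abs).neg.intervalIntegrable _ _)
          ((c2.sub c1).intervalIntegrable _ _) fun s _ => by
            linarith [neg_abs_le (u (x + l) (clamp T s)), le_abs_self (u x (clamp T s))]
      rw [intervalIntegral.integral_neg, intervalIntegral.integral_add
        (c2.abs.intervalIntegrable _ _) (c1.abs.intervalIntegrable _ _)] at hb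
      have hm : ∀ z, ∫ s in 0..t, |u z (clamp T s)| ≤ ∫ s in 0..T, |u z (clamp T s)| := fun z =>
        intervalIntegral.integral_mono_interval le_rfl ht.1 ht.2
          (Eventually.of_forall fun s => abs_nonneg _)
          ((hu.cont_clamp z).abs.intervalIntegrable _ _)
      have := hm x
      have := hm (x + l)
      simp only [Function.comp] at hx2
      rw [e]; linarith
    have c0 := (hv.smooth 0 ⟨le_rfl, hT⟩).continuous
    have ct := (hv.smooth t ht).continuous
    have hL : ∫ y in x..(x + l), (v y t - v y 0) ≤ ∫ y in x..(x + l), (v x t + 1 / 4 - 5 / 8) := by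
      refine intervalIntegral.integral_mono_on hxl ((ct.sub c0).intervalIntegrable _ _) (by simp)
        fun y hy => ?_
      have h1 := abs_le.1 (hmod x y t ht (hclos y hy))
      have h2 := abs_le.1 (hmod x y 0 ⟨le_rfl, hT⟩ (hclos y hy))
      linarith [h1.1, h2.2]
    rw [hmain, intervalIntegral.integral_const, smul_eq_mul] at hL
    have : -(1 / 8) ≤ v x t + 1 / 4 - 5 / 8 := by
      have h3 : -(1 / 8) * l ≤ (v x t + 1 / 4 - 5 / 8) * l := by linarith
      exact le_of_mul_le_mul_right h3 hl0
    linarith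
  obtain ⟨K, hK, hKs⟩ := mem_cocompact.1 hev
  obtain ⟨m, hm0, hm⟩ := (hK.prod (isCompact_Icc (a := (0:ℝ)) (b := T))).exists_forall_le'
    hv.jointCont.continuousOn (a := 0) fun p _ => hpos p.1 _ (clamp_mem hT p.2)
  refine ⟨min m (1 / 4), by positivity, fun x t ht => ?_⟩
  by_cases hx : x ∈ K
  · have := hm (x, t) ⟨hx, ht⟩
    simp only [clamp_eq ht] at this
    exact (min_le_left _ _).trans this
  · exact (min_le_right _ _).trans (hKs hx t ht)

/-! ### The energy density and its time derivative -/

/-- The energy density `u²/2 + R(v - ln v - 1) + c_v(θ - ln θ - 1)`. -/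
noncomputable def dens (R cv v u θ : ℝ) : ℝ :=
  u ^ 2 / 2 + R * (v - Real.log v - 1) + cv * (θ - Real.log θ - 1)

lemma dens_nonneg {R cv v u θ : ℝ} (hR : 0 < R) (hcv : 0 < cv) (hv : 0 < v) (hθ : 0 < θ) :
    0 ≤ dens R cv v u θ := by
  have h1 : 0 ≤ v - Real.log v - 1 := by linarith [Real.log_le_sub_one_of_pos hv]
  have h2 : 0 ≤ θ - Real.log θ - 1 := by linarith [Real.log_le_sub_one_of_pos hθ]
  unfold dens; positivity

lemma dens_hasDerivAt {μ κ R cv : ℝ} {v u θ : ℝ → ℝ → ℝ}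
    (hsol : IsClassicalSolution μ κ R cv v u θ) (x t : ℝ) (ht : 0 ≤ t) :
    HasDerivAt (fun s => dens R cv (v x s) (u x s) (θ x s))
      (rate μ κ R (v x t) (u x t) (θ x t) (deriv (fun y => v y t) x) (deriv (fun y => u y t) x)
        (deriv (fun y => θ y t) x) (deriv (deriv fun y => u y t) x)
        (deriv (deriv fun y => θ y t) x)) t := by
  have nv := (hsol.v_pos x t ht).ne'
  have nθ := (hsol.θ_pos x t ht).ne'
  have dv := (hsol.smooth_t_v x t ht).hasDerivAt
  have du := (hsol.smooth_t_u x t ht).hasDerivAt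
  have dθ := (hsol.smooth_t_θ x t ht).hasDerivAt
  have xv := ((hsol.smooth_x_v t ht).differentiable (by norm_num) x).hasDerivAt
  have xθ := ((hsol.smooth_x_θ t ht).differentiable (by norm_num) x).hasDerivAt
  have xu' := ((deriv_contDiff (hsol.smooth_x_u t ht)).differentiable (by norm_num) x).hasDerivAt
  have xθ' := ((deriv_contDiff (hsol.smooth_x_θ t ht)).differentiable (by norm_num) x).hasDerivAt
  have e1 : deriv (fun s => v x s) t = deriv (fun y => u y t) x := hsol.eq_mass x t ht
  have e2 : deriv (fun s => u x s) t + deriv (fun y => R * θ y t / v y t) x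
      = μ * deriv (fun y => deriv (fun z => u z t) y / v y t) x := hsol.eq_momentum x t ht
  have e3 : cv * deriv (fun s => θ x s) t + (R * θ x t / v x t) * deriv (fun y => u y t) x
      = κ * deriv (fun y => deriv (fun z => θ z t) y / v y t) x
        + μ * (deriv (fun y => u y t) x) ^ 2 / v x t := hsol.eq_energy x t ht
  have f1 : deriv (fun y => R * θ y t / v y t) x = _ := ((xθ.const_mul R).div xv nv).deriv
  have f2 : deriv (fun y => deriv (fun z => u z t) y / v y t) x = _ := (xu'.div xv nv).deriv
  have f3 : deriv (fun y => deriv (fun z => θ z t) y / v y t) x = _ := (xθ'.div xv nv).deriv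
  rw [f1, f2] at e2
  rw [f3] at e3
  rw [e1] at dv
  have h := (((du.pow 2).div_const 2).add (((dv.sub (dv.log nv)).sub_const 1).const_mul R)).add
    (((dθ.sub (dθ.log nθ)).sub_const 1).const_mul cv)
  refine (h.congr_deriv ?_).congr_of_eventuallyEq (Eventually.of_forall fun y => ?_)
  · have g2 := eq_sub_of_add_eq e2
    have g3 := eq_sub_of_add_eq e3
    rw [g2]
    have : cv * (deriv (fun s => θ x s) t - deriv (fun s => θ x s) t / θ x t)
        = (1 - 1 / θ x t) * (cv * deriv (fun s => θ x s) t) := by ring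
    rw [this, g3]
    unfold rate
    field_simp
    simp only [Nat.cast_ofNat]
    ring
  · simp [dens]

/-- The rate and both dissipation densities are integrable on rectangles: by joint continuity all
coefficients are bounded there (in particular `1 / θ` is), and what remains is a square-integrable
derivative or a product of two of them. -/
lemma rate_integrable {μ κ R T B a b : ℝ} {v u θ : ℝ → ℝ → ℝ}
    (hv : Slab T B v) (hu : Slab T B u) (hθ : Slab T B θ)
    (pv : ∀ x, ∀ t ∈ Icc 0 T, 0 < v x t) (pθ : ∀ x, ∀ t ∈ Icc 0 T, 0 < θ x t)
    (huxx : ∫⁻ t in Icc 0 T, L2 (deriv (deriv fun y => u y (clamp T t))) ^ 2 < ⊤)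
    (hθxx : ∫⁻ t in Icc 0 T, L2 (deriv (deriv fun y => θ y (clamp T t))) ^ 2 < ⊤)
    {w : ℝ → ℝ} (hw : Continuous w) :
    IntegrableOn (fun p : ℝ × ℝ => w p.1 * rate μ κ R (v p.1 (clamp T p.2)) (u p.1 (clamp T p.2))
        (θ p.1 (clamp T p.2)) (deriv (fun y => v y (clamp T p.2)) p.1)
        (deriv (fun y => u y (clamp T p.2)) p.1) (deriv (fun y => θ y (clamp T p.2)) p.1)
        (deriv (deriv fun y => u y (clamp T p.2)) p.1)
        (deriv (deriv fun y => θ y (clamp T p.2)) p.1)) (Icc a b ×ˢ Icc 0 T)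
      ∧ IntegrableOn (fun p : ℝ × ℝ => w p.1 * (deriv (fun y => u y (clamp T p.2)) p.1 ^ 2 /
        (v p.1 (clamp T p.2) * θ p.1 (clamp T p.2)))) (Icc a b ×ˢ Icc 0 T)
      ∧ IntegrableOn (fun p : ℝ × ℝ => w p.1 * (deriv (fun y => θ y (clamp T p.2)) p.1 ^ 2 /
        (v p.1 (clamp T p.2) * θ p.1 (clamp T p.2) ^ 2))) (Icc a b ×ˢ Icc 0 T) := by
  have hK : IsCompact (Icc a b ×ˢ Icc 0 T) := isCompact_Icc.prod isCompact_Icc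
  have : IsFiniteMeasure (volume.restrict (Icc a b ×ˢ Icc 0 T)) :=
    ⟨by simpa using hK.measure_lt_top⟩
  have cV := hv.jointCont
  have cU := hu.jointCont
  have cH := hθ.jointCont
  have mvx := hv.memLp_dx a b
  have mux := hu.memLp_dx a b
  have mhx := hθ.memLp_dx a b
  have muxx := memLp_slab (g := fun x t => deriv (deriv fun y => u y (clamp T t)) x)
    hu.meas_dxx huxx a b
  have mhxx := memLp_slab (g := fun x t => deriv (deriv fun y => θ y (clamp T t)) x)
    hθ.meas_dxx hθxx a b
  have cW : Continuous fun p : ℝ × ℝ => w p.1 := hw.comp continuous_fst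
  have nV : ∀ p : ℝ × ℝ, v p.1 (clamp T p.2) ≠ 0 := fun p => (pv _ _ (clamp_mem hv.hT _)).ne'
  have nH : ∀ p : ℝ × ℝ, θ p.1 (clamp T p.2) ≠ 0 := fun p => (pθ _ _ (clamp_mem hv.hT _)).ne'
  generalize hVx : (fun p : ℝ × ℝ => deriv (fun y => v y (clamp T p.2)) p.1) = Vx at mvx
  generalize hUx : (fun p : ℝ × ℝ => deriv (fun y => u y (clamp T p.2)) p.1) = Ux at mux
  generalize hHx : (fun p : ℝ × ℝ => deriv (fun y => θ y (clamp T p.2)) p.1) = Hx at mhx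
  generalize hUxx : (fun p : ℝ × ℝ => deriv (deriv fun y => u y (clamp T p.2)) p.1) = Uxx at muxx
  generalize hHxx : (fun p : ℝ × ℝ => deriv (deriv fun y => θ y (clamp T p.2)) p.1) = Hxx at mhxx
  have aVx : ∀ p : ℝ × ℝ, deriv (fun y => v y (clamp T p.2)) p.1 = Vx p := congrFun hVx
  have aUx : ∀ p : ℝ × ℝ, deriv (fun y => u y (clamp T p.2)) p.1 = Ux p := congrFun hUx
  have aHx : ∀ p : ℝ × ℝ, deriv (fun y => θ y (clamp T p.2)) p.1 = Hx p := congrFun hHx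
  have aUxx : ∀ p : ℝ × ℝ, deriv (deriv fun y => u y (clamp T p.2)) p.1 = Uxx p := congrFun hUxx
  have aHxx : ∀ p : ℝ × ℝ, deriv (deriv fun y => θ y (clamp T p.2)) p.1 = Hxx p := congrFun hHxx
  simp only [aVx, aUx, aHx, aUxx, aHxx]
  clear hVx hUx hHx hUxx hHxx aVx aUx aHx aUxx aHxx huxx hθxx
  generalize hV : (fun p : ℝ × ℝ => v p.1 (clamp T p.2)) = V at cV
  generalize hU : (fun p : ℝ × ℝ => u p.1 (clamp T p.2)) = U at cU
  generalize hH : (fun p : ℝ × ℝ => θ p.1 (clamp T p.2)) = H at cH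
  have aV : ∀ p : ℝ × ℝ, v p.1 (clamp T p.2) = V p := congrFun hV
  have aU : ∀ p : ℝ × ℝ, u p.1 (clamp T p.2) = U p := congrFun hU
  have aH : ∀ p : ℝ × ℝ, θ p.1 (clamp T p.2) = H p := congrFun hH
  simp only [aV, aU, aH] at nV nH ⊢
  have nV2 : ∀ p, V p ^ 2 ≠ 0 := fun p => pow_ne_zero _ (nV p)
  have nVH : ∀ p, V p * H p ≠ 0 := fun p => mul_ne_zero (nV p) (nH p)
  have nVH2 : ∀ p, V p * H p ^ 2 ≠ 0 := fun p => mul_ne_zero (nV p) (pow_ne_zero _ (nH p))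
  -- a continuous coefficient times an integrable function is integrable on the compact rectangle
  have key : ∀ {c g : ℝ × ℝ → ℝ}, Continuous c →
      Integrable g (volume.restrict (Icc a b ×ˢ Icc 0 T)) →
      IntegrableOn (fun p => c p * g p) (Icc a b ×ˢ Icc 0 T) :=
    fun hc hg => IntegrableOn.continuousOn_mul hc.continuousOn hg hK
  have one : (1 : ENNReal) ≤ 2 := by norm_num
  refine ⟨?_, ?_, ?_⟩
  · have t1 := key (c := fun p => w p.1 * U p * μ / V p) (by fun_prop (disch := assumption))
      (muxx.integrable one)
    have t2 := key (c := fun p => -(w p.1 * U p * μ / V p ^ 2)) (by fun_prop (disch := assumption))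
      (mux.integrable_mul mvx)
    have t3 := key (c := fun p => -(w p.1 * U p * R / V p)) (by fun_prop (disch := assumption))
      (mhx.integrable one)
    have t4 := key (c := fun p => w p.1 * U p * R * H p / V p ^ 2)
      (by fun_prop (disch := assumption)) (mvx.integrable one)
    have t5 := key (c := fun p => w p.1 * (R * (1 - 1 / V p) - (1 - 1 / H p) * (R * H p / V p)))
      (by fun_prop (disch := assumption)) (mux.integrable one)
    have t6 := key (c := fun p => w p.1 * (1 - 1 / H p) * κ / V p)
      (by fun_prop (disch := assumption)) (mhxx.integrable one)
    have t7 := key (c := fun p => -(w p.1 * (1 - 1 / H p) * κ / V p ^ 2))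
      (by fun_prop (disch := assumption)) (mhx.integrable_mul mvx)
    have t8 := key (c := fun p => w p.1 * (1 - 1 / H p) * μ / V p)
      (by fun_prop (disch := assumption)) mux.integrable_sq
    refine (((((((t1.add t2).add t3).add t4).add t5).add t6).add t7).add t8).congr
      (Eventually.of_forall fun p => ?_)
    have := nV p
    have := nH p
    simp only [Pi.add_apply, Pi.mul_apply, rate]
    field_simp
    ring
  · refine (key (c := fun p => w p.1 / (V p * H p)) (by fun_prop (disch := assumption))
      mux.integrable_sq).congr (Eventually.of_forall fun p => ?_)
    simp only []; ring
  · refine (key (c := fun p => w p.1 / (V p * H p ^ 2)) (by fun_prop (disch := assumption))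
      mhx.integrable_sq).congr (Eventually.of_forall fun p => ?_)
    simp only []; ring

/-! ### Removing the cutoff -/

/-- The cutoff `cut (s²)`, extended by zero outside `[-s², s²]`. -/
noncomputable def bump (s x : ℝ) : ℝ := (max 0 (1 - (x / s ^ 2) ^ 2)) ^ 2

lemma bump_nonneg (s x : ℝ) : 0 ≤ bump s x := sq_nonneg _

lemma bump_measurable (s : ℝ) : Measurable (bump s) := by
  have : Continuous (bump s) := by unfold bump; fun_prop
  exact this.measurable

lemma bump_mono {s s' : ℝ} (hs : 0 < s) (h : s ≤ s') (x : ℝ) : bump s x ≤ bump s' x := by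
  unfold bump
  have : (x / s' ^ 2) ^ 2 ≤ (x / s ^ 2) ^ 2 := by
    rw [div_pow, div_pow]; gcongr
  gcongr

lemma bump_tendsto (x : ℝ) : Tendsto (fun k : ℕ => bump ((k : ℝ) + 1) x) atTop (nhds 1) := by
  have h1 : Tendsto (fun k : ℕ => ((k : ℝ) + 1)) atTop atTop :=
    tendsto_atTop_add_const_right _ _ tendsto_natCast_atTop_atTop
  have h2 : Tendsto (fun k : ℕ => x / ((k : ℝ) + 1) ^ 2) atTop (nhds 0) :=
    ((tendsto_pow_atTop (two_ne_zero)).comp h1).const_div_atTop x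
  have h3 : Continuous (fun y : ℝ => (max 0 (1 - y ^ 2)) ^ 2) := by fun_prop
  have := (h3.tendsto 0).comp h2
  simpa [bump, Function.comp_def] using this

lemma lint_bump {s : ℝ} (hs : 1 ≤ s) {f : ℝ → ℝ} (hf : Continuous f) (h0 : ∀ x, 0 ≤ f x) :
    ENNReal.ofReal (∫ x in (-s ^ 2)..s ^ 2, cut (s ^ 2) x * f x)
      = ∫⁻ x, ENNReal.ofReal (bump s x * f x) := by
  have hs0 : 0 < s := by linarith
  have hn : -s ^ 2 ≤ s ^ 2 := by nlinarith
  have hi : IntegrableOn (fun x => cut (s ^ 2) x * f x) (Ioc (-s ^ 2) (s ^ 2)) := by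
    have : Continuous (fun x => cut (s ^ 2) x * f x) := by unfold cut; fun_prop
    exact this.integrableOn_Ioc
  rw [intervalIntegral.integral_of_le hn, ofReal_integral_eq_lintegral_ofReal hi
    (Eventually.of_forall fun x => mul_nonneg (sq_nonneg _) (h0 x)),
    ← lintegral_indicator measurableSet_Ioc]
  refine lintegral_congr fun x => ?_
  by_cases hx : x ∈ Ioc (-s ^ 2) (s ^ 2)
  · rw [indicator_of_mem hx]
    have hx1 : (x / s ^ 2) ^ 2 ≤ 1 := by
      rw [sq_le_one_iff_abs_le_one, abs_div, abs_of_pos (by positivity : (0:ℝ) < s ^ 2)]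
      exact div_le_one_of_le₀ (abs_le.2 ⟨by linarith [hx.1], hx.2⟩) (by positivity)
    rw [bump, cut, max_eq_right (by linarith)]
  · rw [indicator_of_notMem hx]
    have hx1 : 1 ≤ (x / s ^ 2) ^ 2 := by
      rw [one_le_sq_iff_one_le_abs, abs_div, abs_of_pos (by positivity : (0:ℝ) < s ^ 2),
        one_le_div (by positivity), le_abs']
      by_contra hc
      push Not at hc
      exact hx ⟨by linarith [hc.1], hc.2.le⟩
    rw [bump, max_eq_left (by linarith)]; simp

/-- The cutoff is removed by monotone convergence. -/
lemma bump_lint_tendsto {α : Type*} [MeasurableSpace α] {ν : Measure α} {f : α → ℝ} {X : α → ℝ}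
    (hf : Measurable f) (hX : Measurable X) (h0 : ∀ a, 0 ≤ f a) :
    Tendsto (fun k : ℕ => ∫⁻ a, ENNReal.ofReal (bump ((k : ℝ) + 1) (X a) * f a) ∂ν) atTop
      (nhds (∫⁻ a, ENNReal.ofReal (f a) ∂ν)) := by
  refine lintegral_tendsto_of_tendsto_of_monotone
    (fun k => (((bump_measurable _).comp hX).mul hf).ennreal_ofReal.aemeasurable)
    (Eventually.of_forall fun a k k' hk => ?_) (Eventually.of_forall fun a => ?_)
  · refine ENNReal.ofReal_le_ofReal (mul_le_mul_of_nonneg_right ?_ (h0 a))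
    exact bump_mono (by positivity) (by gcongr) _
  · have := (bump_tendsto (X a)).mul_const (f a)
    rw [one_mul] at this
    exact (ENNReal.continuous_ofReal.tendsto _).comp this

/-! ### The energy estimate -/

/-- basic energy estimate. -/
theorem energy_estimate
    (μ κ R cv : ℝ) (hμ : 0 < μ) (hκ : 0 < κ) (hR : 0 < R) (hcv : 0 < cv)
    (v u θ : ℝ → ℝ → ℝ)
    (hsol : IsClassicalSolution μ κ R cv v u θ)
    (hE : (∫⁻ x : ℝ, ENNReal.ofReal (u x 0 ^ 2 / 2
        + R * (v x 0 - Real.log (v x 0) - 1)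
        + cv * (θ x 0 - Real.log (θ x 0) - 1))) < ⊤) :
    ∀ T : ℝ, 0 ≤ T →
      (∫⁻ x : ℝ, ENNReal.ofReal (u x T ^ 2 / 2
          + R * (v x T - Real.log (v x T) - 1)
          + cv * (θ x T - Real.log (θ x T) - 1)))
        + ENNReal.ofReal μ * (∫⁻ t in Icc (0 : ℝ) T, ∫⁻ x : ℝ,
            ENNReal.ofReal (pdx u x t ^ 2 / (v x t * θ x t)))
        + ENNReal.ofReal κ * (∫⁻ t in Icc (0 : ℝ) T, ∫⁻ x : ℝ,
            ENNReal.ofReal (pdx θ x t ^ 2 / (v x t * θ x t ^ 2)))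
      ≤ ∫⁻ x : ℝ, ENNReal.ofReal (u x 0 ^ 2 / 2
          + R * (v x 0 - Real.log (v x 0) - 1)
          + cv * (θ x 0 - Real.log (θ x 0) - 1)) := by
  intro T hT
  rcases hT.eq_or_lt with rfl | hT0
  · simp
  -- a common bound for all `L²` norms on `[0, T]`
  obtain ⟨B', hB'⟩ := hsol.reg_H1 T hT
  obtain ⟨B, hBdef⟩ : ∃ B, B = max B' 0 := ⟨_, rfl⟩
  have hB0 : 0 ≤ B := hBdef ▸ le_max_right _ _
  have hB : ∀ t ∈ Icc 0 T,
      H1 (fun x => v x t - 1) + H1 (fun x => u x t) + H1 (fun x => θ x t - 1)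
        ≤ ENNReal.ofReal B := fun t ht =>
    (hB' t ht).trans (ENNReal.ofReal_le_ofReal (hBdef ▸ le_max_left _ _))
  simp only [H1, deriv_sub_const_fun] at hB
  have bvx : ∀ t ∈ Icc 0 T, L2 (deriv fun x => v x t) ≤ ENNReal.ofReal B := fun t ht =>
    le_trans (le_add_self.trans (le_self_add.trans le_self_add)) (hB t ht)
  have bu : ∀ t ∈ Icc 0 T, L2 (fun x => u x t) ≤ ENNReal.ofReal B := fun t ht =>
    le_trans (le_self_add.trans (le_add_self.trans le_self_add)) (hB t ht)
  have bux : ∀ t ∈ Icc 0 T, L2 (deriv fun x => u x t) ≤ ENNReal.ofReal B := fun t ht =>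
    le_trans (le_add_self.trans (le_add_self.trans le_self_add)) (hB t ht)
  have bθ : ∀ t ∈ Icc 0 T, L2 (fun x => θ x t - 1) ≤ ENNReal.ofReal B := fun t ht =>
    le_trans (le_self_add.trans le_add_self) (hB t ht)
  have bθx : ∀ t ∈ Icc 0 T, L2 (deriv fun x => θ x t) ≤ ENNReal.ofReal B := fun t ht =>
    le_trans (le_add_self.trans le_add_self) (hB t ht)
  have sv : Slab T B v := ⟨hT, hB0, fun t ht => hsol.smooth_x_v t ht.1,
    fun x t ht => (hsol.smooth_t_v x t ht.1).continuousAt, bvx⟩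
  have su : Slab T B u := ⟨hT, hB0, fun t ht => hsol.smooth_x_u t ht.1,
    fun x t ht => (hsol.smooth_t_u x t ht.1).continuousAt, bux⟩
  have sθ : Slab T B θ := ⟨hT, hB0, fun t ht => hsol.smooth_x_θ t ht.1,
    fun x t ht => (hsol.smooth_t_θ x t ht.1).continuousAt, bθx⟩
  have pv : ∀ x, ∀ t ∈ Icc 0 T, 0 < v x t := fun x t ht => hsol.v_pos x t ht.1
  have pθ : ∀ x, ∀ t ∈ Icc 0 T, 0 < θ x t := fun x t ht => hsol.θ_pos x t ht.1
  obtain ⟨M, hM⟩ : ∃ M, M = 2 * B ^ 2 + 3 := ⟨_, rfl⟩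
  have huM : ∀ x, ∀ t ∈ Icc 0 T, |u x t| ≤ M := fun x t ht => by
    have := sup_bound (su.smooth t ht) hB0 (bu t ht) (bux t ht) x
    linarith
  have hθM : ∀ x, ∀ t ∈ Icc 0 T, θ x t ≤ M := fun x t ht => by
    have := sup_bound (f := fun x => θ x t - 1) ((sθ.smooth t ht).sub contDiff_const) hB0
      (bθ t ht) (by simpa only [deriv_sub_const_fun] using bθx t ht) x
    have := (abs_le.1 this).2
    linarith
  obtain ⟨m, hm, hvm⟩ := v_lower sv su pv
    (fun x t ht => by
      have h := (hsol.smooth_t_v x t ht.1).hasDerivAt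
      have e : deriv (fun s => v x s) t = deriv (fun y => u y t) x := hsol.eq_mass x t ht.1
      rwa [e] at h)
    huM (hsol.farfield_v 0 le_rfl) (fun t ht => hsol.farfield_u t ht.1)
  have huxx : ∫⁻ t in Icc 0 T, L2 (deriv (deriv fun y => u y (clamp T t))) ^ 2 < ⊤ := by
    refine lt_of_le_of_lt (setLIntegral_mono' measurableSet_Icc fun t ht => ?_) (hsol.reg_H2 T hT0)
    rw [clamp_eq ht]
    exact le_trans (pow_le_pow_left' le_add_self 2) le_self_add
  have hθxx : ∫⁻ t in Icc 0 T, L2 (deriv (deriv fun y => θ y (clamp T t))) ^ 2 < ⊤ := by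
    refine lt_of_le_of_lt (setLIntegral_mono' measurableSet_Icc fun t ht => ?_) (hsol.reg_H2 T hT0)
    rw [clamp_eq ht]
    refine le_trans (pow_le_pow_left' ?_ 2) le_add_self
    simp only [H2, deriv_sub_const_fun]
    exact le_add_self
  -- from here on the dissipation densities are written with clamped time
  set D1 : ℝ → ℝ → ℝ := fun x t => deriv (fun y => u y (clamp T t)) x ^ 2 /
    (v x (clamp T t) * θ x (clamp T t)) with hD1
  set D2 : ℝ → ℝ → ℝ := fun x t => deriv (fun y => θ y (clamp T t)) x ^ 2 /
    (v x (clamp T t) * θ x (clamp T t) ^ 2) with hD2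
  have D1nn : ∀ x t, 0 ≤ D1 x t := fun x t => by
    have := pv x _ (clamp_mem hT t)
    have := pθ x _ (clamp_mem hT t)
    simp only [hD1]; positivity
  have D2nn : ∀ x t, 0 ≤ D2 x t := fun x t => by
    have := pv x _ (clamp_mem hT t)
    have := pθ x _ (clamp_mem hT t)
    simp only [hD2]; positivity
  have mD1 : Measurable fun p : ℝ × ℝ => D1 p.1 p.2 :=
    (su.meas_dx.pow_const 2).div (sv.jointCont.measurable.mul sθ.jointCont.measurable)
  have mD2 : Measurable fun p : ℝ × ℝ => D2 p.1 p.2 :=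
    (sθ.meas_dx.pow_const 2).div (sv.jointCont.measurable.mul (sθ.jointCont.measurable.pow_const 2))
  have cD1 : ∀ t, Continuous fun x => D1 x t := fun t => by
    have c1 := (sv.smooth _ (clamp_mem hT t)).continuous
    have c2 := (sθ.smooth _ (clamp_mem hT t)).continuous
    have c3 := (su.smooth _ (clamp_mem hT t)).continuous_deriv (by norm_num)
    exact (c3.pow 2).div (c1.mul c2) fun x =>
      (mul_pos (pv x _ (clamp_mem hT t)) (pθ x _ (clamp_mem hT t))).ne'
  have cD2 : ∀ t, Continuous fun x => D2 x t := fun t => by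
    have c1 := (sv.smooth _ (clamp_mem hT t)).continuous
    have c2 := (sθ.smooth _ (clamp_mem hT t)).continuous
    have c3 := (sθ.smooth _ (clamp_mem hT t)).continuous_deriv (by norm_num)
    exact (c3.pow 2).div (c1.mul (c2.pow 2)) fun x =>
      (mul_pos (pv x _ (clamp_mem hT t)) (pow_pos (pθ x _ (clamp_mem hT t)) 2)).ne'
  set E : ℝ → ℝ → ℝ := fun t x => dens R cv (v x t) (u x t) (θ x t) with hEdef
  have Enn : ∀ t ∈ Icc 0 T, ∀ x, 0 ≤ E t x := fun t ht x =>
    dens_nonneg hR hcv (pv x t ht) (pθ x t ht)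
  have cE : ∀ t ∈ Icc 0 T, Continuous (E t) := fun t ht => by
    have c1 := (sv.smooth t ht).continuous
    have c2 := (sθ.smooth t ht).continuous
    have c3 := (su.smooth t ht).continuous
    have l1 := c1.log fun x => (pv x t ht).ne'
    have l2 := c2.log fun x => (pθ x t ht).ne'
    simp only [hEdef, dens]
    fun_prop
  have h0T : (0 : ℝ) ∈ Icc 0 T := ⟨le_rfl, hT⟩
  have hTT : T ∈ Icc 0 T := ⟨hT, le_rfl⟩
  obtain ⟨C, hC⟩ : ∃ C, C = fluxConst μ κ R m M * (3 * B ^ 2 + 2) * T := ⟨_, rfl⟩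
  -- the localised energy inequality
  have hreal : ∀ s : ℝ, 1 ≤ s →
      (∫ x in (-s ^ 2)..s ^ 2, cut (s ^ 2) x * E T x)
        + μ * (∫ t in 0..T, ∫ x in (-s ^ 2)..s ^ 2, cut (s ^ 2) x * D1 x t)
        + κ * (1 - 1 / s) * (∫ t in 0..T, ∫ x in (-s ^ 2)..s ^ 2, cut (s ^ 2) x * D2 x t)
      ≤ (∫ x in (-s ^ 2)..s ^ 2, cut (s ^ 2) x * E 0 x) + C / s := by
    intro s hs
    have hn : -s ^ 2 ≤ s ^ 2 := by nlinarith
    have cw : Continuous (cut (s ^ 2)) := by unfold cut; fun_prop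
    obtain ⟨iG, iD1, iD2⟩ := rate_integrable (μ := μ) (κ := κ) (R := R) (a := -s ^ 2)
      (b := s ^ 2) sv su sθ pv pθ huxx hθxx cw
    have hftc := ftc_fubini (f := fun x t => cut (s ^ 2) x * E t x) hn hT
      (g := fun x t => cut (s ^ 2) x * rate μ κ R (v x (clamp T t)) (u x (clamp T t))
        (θ x (clamp T t)) (deriv (fun y => v y (clamp T t)) x)
        (deriv (fun y => u y (clamp T t)) x) (deriv (fun y => θ y (clamp T t)) x)
        (deriv (deriv fun y => u y (clamp T t)) x)
        (deriv (deriv fun y => θ y (clamp T t)) x))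
      (fun x t ht => by
        rw [clamp_eq ht]
        exact (dens_hasDerivAt hsol x t ht.1).const_mul _) iG
    have jG := slice_integrable (g := fun x t => cut (s ^ 2) x * rate μ κ R (v x (clamp T t))
        (u x (clamp T t)) (θ x (clamp T t)) (deriv (fun y => v y (clamp T t)) x)
        (deriv (fun y => u y (clamp T t)) x) (deriv (fun y => θ y (clamp T t)) x)
        (deriv (deriv fun y => u y (clamp T t)) x)
        (deriv (deriv fun y => θ y (clamp T t)) x)) hn hT iG
    have jD1 := slice_integrable (g := fun x t => cut (s ^ 2) x * D1 x t) hn hT iD1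
    have jD2 := slice_integrable (g := fun x t => cut (s ^ 2) x * D2 x t) hn hT iD2
    have iT : IntervalIntegrable (fun x => cut (s ^ 2) x * E T x) volume (-s ^ 2) (s ^ 2) :=
      (cw.mul (cE T hTT)).intervalIntegrable _ _
    have i0 : IntervalIntegrable (fun x => cut (s ^ 2) x * E 0 x) volume (-s ^ 2) (s ^ 2) :=
      (cw.mul (cE 0 h0T)).intervalIntegrable _ _
    rw [intervalIntegral.integral_sub iT i0] at hftc
    have hpt : ∀ t ∈ Icc 0 T, _ := fun t _ =>
      space_ineq (A := 3 * B ^ 2) hμ hκ hR hm hs (sv.smooth _ (clamp_mem hT t))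
        (su.smooth _ (clamp_mem hT t)) (sθ.smooth _ (clamp_mem hT t))
        (fun x => hvm x _ (clamp_mem hT t)) (fun x => pθ x _ (clamp_mem hT t))
        (fun x => hθM x _ (clamp_mem hT t)) (fun x => huM x _ (clamp_mem hT t)) (by
          have c1 := (su.smooth _ (clamp_mem hT t)).continuous
          have c2 := (su.smooth _ (clamp_mem hT t)).continuous_deriv (by norm_num)
          have c3 := (sθ.smooth _ (clamp_mem hT t)).continuous_deriv (by norm_num)
          have q1 := integral_sq_le c1 hB0 (bu _ (clamp_mem hT t)) hn
          have q2 := integral_sq_le c2 hB0 (bux _ (clamp_mem hT t)) hn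
          have q3 := integral_sq_le c3 hB0 (bθx _ (clamp_mem hT t)) hn
          rw [integral_three_sq c1 c2 c3]
          linarith)
    have hint := intervalIntegral.integral_mono_on hT
      ((jG.add (jD1.const_mul μ)).add (jD2.const_mul (κ * (1 - 1 / s))))
      (continuous_const.intervalIntegrable (μ := volume) _ _) hpt
    rw [intervalIntegral.integral_add (jG.add (jD1.const_mul μ))
      (jD2.const_mul (κ * (1 - 1 / s))), intervalIntegral.integral_add jG (jD1.const_mul μ),
      intervalIntegral.integral_const_mul, intervalIntegral.integral_const_mul,
      intervalIntegral.integral_const, ← hftc, smul_eq_mul] at hint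
    have eC : (T - 0) * (fluxConst μ κ R m M * (3 * B ^ 2 + 2) / s) = C / s := by
      rw [hC]; ring
    rw [eC] at hint
    linarith
  have hC0 : 0 ≤ C := by
    have : 0 < M := (pθ 0 0 h0T).trans_le (hθM 0 0 h0T)
    rw [hC]; unfold fluxConst; positivity
  have hdouble : ∀ s : ℝ, 1 ≤ s → ∀ D : ℝ → ℝ → ℝ, (∀ x t, 0 ≤ D x t) →
      (∀ t, Continuous fun x => D x t) → Measurable (fun p : ℝ × ℝ => D p.1 p.2) →
      IntervalIntegrable (fun t => ∫ x in (-s ^ 2)..s ^ 2, cut (s ^ 2) x * D x t) volume 0 T →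
      ENNReal.ofReal (∫ t in 0..T, ∫ x in (-s ^ 2)..s ^ 2, cut (s ^ 2) x * D x t)
        = ∫⁻ p : ℝ × ℝ, ENNReal.ofReal (bump s p.1 * D p.1 p.2)
            ∂(volume.prod (volume.restrict (Icc 0 T))) := by
    intro s hs D hD cD mD hi
    have hn : -s ^ 2 ≤ s ^ 2 := by nlinarith
    have hm : Measurable fun p : ℝ × ℝ => ENNReal.ofReal (bump s p.1 * D p.1 p.2) :=
      (((bump_measurable s).comp measurable_fst).mul mD).ennreal_ofReal
    rw [intervalIntegral.integral_of_le hT, ofReal_integral_eq_lintegral_ofReal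
      ((intervalIntegrable_iff_integrableOn_Ioc_of_le hT).1 hi)
      (Eventually.of_forall fun t => intervalIntegral.integral_nonneg hn fun x _ =>
        mul_nonneg (sq_nonneg _) (hD x t)),
      lintegral_prod_symm' _ hm,
      setLIntegral_congr Ioc_ae_eq_Icc]
    exact lintegral_congr fun t => lint_bump hs (cD t) fun x => hD x t
  -- the same inequality between `ℝ≥0∞`-valued integrals
  have henn : ∀ k : ℕ,
      (∫⁻ x, ENNReal.ofReal (bump ((k : ℝ) + 1) x * E T x))
        + ENNReal.ofReal μ * (∫⁻ p : ℝ × ℝ, ENNReal.ofReal (bump ((k : ℝ) + 1) p.1 * D1 p.1 p.2)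
            ∂(volume.prod (volume.restrict (Icc 0 T))))
        + ENNReal.ofReal (κ * (1 - 1 / ((k : ℝ) + 1))) *
          (∫⁻ p : ℝ × ℝ, ENNReal.ofReal (bump ((k : ℝ) + 1) p.1 * D2 p.1 p.2)
            ∂(volume.prod (volume.restrict (Icc 0 T))))
      ≤ (∫⁻ x, ENNReal.ofReal (bump ((k : ℝ) + 1) x * E 0 x))
        + ENNReal.ofReal (C / ((k : ℝ) + 1)) := by
    intro k
    obtain ⟨s, hsdef⟩ : ∃ s : ℝ, s = (k : ℝ) + 1 := ⟨_, rfl⟩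
    have hs : 1 ≤ s := by rw [hsdef]; linarith [k.cast_nonneg (α := ℝ)]
    rw [← hsdef]
    have hs0 : 0 < s := by linarith
    have hn : -s ^ 2 ≤ s ^ 2 := by nlinarith
    have cw : Continuous (cut (s ^ 2)) := by unfold cut; fun_prop
    obtain ⟨-, iD1, iD2⟩ := rate_integrable (μ := μ) (κ := κ) (R := R) (a := -s ^ 2)
      (b := s ^ 2) sv su sθ pv pθ huxx hθxx cw
    have jD1 := slice_integrable (g := fun x t => cut (s ^ 2) x * D1 x t) hn hT iD1
    have jD2 := slice_integrable (g := fun x t => cut (s ^ 2) x * D2 x t) hn hT iD2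
    rw [← hdouble s hs D1 D1nn cD1 mD1 jD1, ← hdouble s hs D2 D2nn cD2 mD2 jD2,
      ← lint_bump hs (cE T hTT) (Enn T hTT), ← lint_bump hs (cE 0 h0T) (Enn 0 h0T)]
    have nn : ∀ D : ℝ → ℝ → ℝ, (∀ x t, 0 ≤ D x t) →
        0 ≤ ∫ t in 0..T, ∫ x in (-s ^ 2)..s ^ 2, cut (s ^ 2) x * D x t := fun D hD =>
      intervalIntegral.integral_nonneg hT fun t _ => intervalIntegral.integral_nonneg hn
        fun x _ => mul_nonneg (sq_nonneg _) (hD x t)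
    have nnE : ∀ t ∈ Icc 0 T, 0 ≤ ∫ x in (-s ^ 2)..s ^ 2, cut (s ^ 2) x * E t x := fun t ht =>
      intervalIntegral.integral_nonneg hn fun x _ => mul_nonneg (sq_nonneg _) (Enn t ht x)
    have n1 := nn D1 D1nn
    have n2 := nn D2 D2nn
    have nT := nnE T hTT
    have n0 := nnE 0 h0T
    have hk : 0 ≤ κ * (1 - 1 / s) := by
      have : 1 / s ≤ 1 := by rw [div_le_one hs0]; exact hs
      exact mul_nonneg hκ.le (by linarith)
    rw [← ENNReal.ofReal_mul hμ.le, ← ENNReal.ofReal_mul hk,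
      ← ENNReal.ofReal_add nT (by positivity), ← ENNReal.ofReal_add (by positivity) (by positivity),
      ← ENNReal.ofReal_add n0 (by positivity)]
    exact ENNReal.ofReal_le_ofReal (hreal s hs)
  -- passage to the limit by monotone convergence
  have l1 := bump_lint_tendsto (ν := volume) (X := id) (cE T hTT).measurable measurable_id
    (Enn T hTT)
  have l2 := bump_lint_tendsto (ν := (volume : Measure ℝ).prod (volume.restrict (Icc 0 T)))
    (X := Prod.fst) mD1 measurable_fst fun p => D1nn p.1 p.2
  have l3 := bump_lint_tendsto (ν := (volume : Measure ℝ).prod (volume.restrict (Icc 0 T)))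
    (X := Prod.fst) mD2 measurable_fst fun p => D2nn p.1 p.2
  have l4 := bump_lint_tendsto (ν := volume) (X := id) (cE 0 h0T).measurable measurable_id
    (Enn 0 h0T)
  have l5 : Tendsto (fun k : ℕ => ENNReal.ofReal (κ * (1 - 1 / ((k : ℝ) + 1)))) atTop
      (nhds (ENNReal.ofReal κ)) := by
    have := ((tendsto_one_div_add_atTop_nhds_zero_nat (𝕜 := ℝ)).const_sub 1).const_mul κ
    rw [sub_zero, mul_one] at this
    exact (ENNReal.continuous_ofReal.tendsto _).comp this
  have l6 : Tendsto (fun k : ℕ => ENNReal.ofReal (C / ((k : ℝ) + 1))) atTop (nhds 0) := by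
    have := (tendsto_one_div_add_atTop_nhds_zero_nat (𝕜 := ℝ)).const_mul C
    simp only [mul_one_div, mul_zero] at this
    have h := (ENNReal.continuous_ofReal.tendsto _).comp this
    rw [ENNReal.ofReal_zero] at h
    exact h
  have hfin := le_of_tendsto_of_tendsto'
    ((l1.add (ENNReal.Tendsto.const_mul l2 (Or.inr ENNReal.ofReal_ne_top))).add
      (ENNReal.Tendsto.mul l5 (Or.inl (by simpa using hκ)) l3 (Or.inr ENNReal.ofReal_ne_top)))
    (l4.add l6) henn
  rw [add_zero, lintegral_prod_symm' _ mD1.ennreal_ofReal,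
    lintegral_prod_symm' _ mD2.ennreal_ofReal] at hfin
  have g1 : ∫⁻ t in Icc (0 : ℝ) T, ∫⁻ x : ℝ, ENNReal.ofReal (pdx u x t ^ 2 / (v x t * θ x t))
      = ∫⁻ t in Icc (0 : ℝ) T, ∫⁻ x : ℝ, ENNReal.ofReal (D1 x t) :=
    setLIntegral_congr_fun measurableSet_Icc fun t ht => by
      simp only [hD1, clamp_eq ht, pdx]
  have g2 : ∫⁻ t in Icc (0 : ℝ) T, ∫⁻ x : ℝ, ENNReal.ofReal (pdx θ x t ^ 2 / (v x t * θ x t ^ 2))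
      = ∫⁻ t in Icc (0 : ℝ) T, ∫⁻ x : ℝ, ENNReal.ofReal (D2 x t) :=
    setLIntegral_congr_fun measurableSet_Icc fun t ht => by
      simp only [hD2, clamp_eq ht, pdx]
  rw [g1, g2]
  exact hfin
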